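/- arXiv:2402.00964 — 2 statements merged into one kernel-verified Lean document; each statement's English description precedes it below -/
import Mathlib

section
/- The relation ≼_CC, defined by p ≼_CC q iff every formula of L_CC satisfied by p is satisfied by q, is itself a covariant-contravariant simulation: if p ≼_CC q then (1) for every a ∈ A^r ∪ A^bi and every p →a p' there exists q →a q' with p' ≼_CC q', and (2) for every a ∈ A^l ∪ A^bi and every q →a q' there exists p →a p' with p' ≼_CC q'. -/
/-!
Both clauses are proved by contradiction, gathering distinguishing formulas. If `p →a p'` had no
matching move of `q`, every `a`-successor `q'` of `q` would have a formula `φ q'` true at `p'` and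
false at `q'`; then `⟨a⟩ ⋀ φ` holds at `p` but not at `q`. Dually, if `q →a q'` had no matching
move of `p`, every `a`-successor `p'` of `p` would have a formula `φ p'` true at `p'` and false at
`q'`; then `[a] ⋁ φ` holds at `p` but not at `q`. The conjunction and the disjunction are indexed
by the subtype of all `a`-successors, so no image-finiteness is needed.
-/

/-- A covariant-contravariant simulation between two LTSs with transition
relations `trP` and `trQ`, w.r.t. the partition `{Ar, Al, Abi}` of the alphabet. -/
def CCSim {P Q A : Type} (Ar Al Abi : Set A)
    (trP : P → A → P → Prop) (trQ : Q → A → Q → Prop) (S : P → Q → Prop) : Prop :=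
  ∀ p q, S p q →
    (∀ a ∈ Ar ∪ Abi, ∀ p', trP p a p' → ∃ q', trQ q a q' ∧ S p' q') ∧
    (∀ a ∈ Al ∪ Abi, ∀ q', trQ q a q' → ∃ p', trP p a p' ∧ S p' q')

/-- The class `L_CC` of covariant-contravariant simulation formulas:
`tt`, `ff`, set-indexed conjunctions and disjunctions, `⟨a⟩φ` for
`a ∈ Ar ∪ Abi` and `[a]φ` for `a ∈ Al ∪ Abi`. -/
inductive LCC (A : Type) (Ar Al Abi : Set A) : Type 1 where
  | tt : LCC A Ar Al Abi
  | ff : LCC A Ar Al Abi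
  | conj (I : Type) (f : I → LCC A Ar Al Abi) : LCC A Ar Al Abi
  | disj (I : Type) (f : I → LCC A Ar Al Abi) : LCC A Ar Al Abi
  | dia (a : A) (h : a ∈ Ar ∪ Abi) (φ : LCC A Ar Al Abi) : LCC A Ar Al Abi
  | box (a : A) (h : a ∈ Al ∪ Abi) (φ : LCC A Ar Al Abi) : LCC A Ar Al Abi

/-- Satisfaction relation for `L_CC`. -/
def SatCC {P A : Type} {Ar Al Abi : Set A} (tr : P → A → P → Prop) :
    P → LCC A Ar Al Abi → Prop
  | _, .tt => True
  | _, .ff => False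
  | p, .conj _ f => ∀ i, SatCC tr p (f i)
  | p, .disj _ f => ∃ i, SatCC tr p (f i)
  | p, .dia a _ φ => ∃ p', tr p a p' ∧ SatCC tr p' φ
  | p, .box a _ φ => ∀ p', tr p a p' → SatCC tr p' φ

/-- Completeness: the relation `≼_CC` of logical inclusion w.r.t. `L_CC`
is itself a covariant-contravariant simulation. -/
theorem ccLogicPreorder_isSim {P Q A : Type} (Ar Al Abi : Set A)
    (trP : P → A → P → Prop) (trQ : Q → A → Q → Prop) :
    CCSim Ar Al Abi trP trQ
      (fun p q => ∀ φ : LCC A Ar Al Abi, SatCC trP p φ → SatCC trQ q φ) := by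
  intro p q hpq
  refine ⟨fun a ha p' hp' => ?_, fun a ha q' hq' => ?_⟩
  · by_contra! hcon
    choose φ hφP hφQ using hcon
    obtain ⟨q', hq', hsat⟩ :=
      hpq (.dia a ha (.conj {q' // trQ q a q'} fun x => φ x.1 x.2))
        ⟨p', hp', fun x => hφP x.1 x.2⟩
    exact hφQ q' hq' (hsat ⟨q', hq'⟩)
  · by_contra! hcon
    choose φ hφP hφQ using hcon
    obtain ⟨x, hx⟩ :=
      hpq (.box a ha (.disj {p' // trP p a p'} fun x => φ x.1 x.2))
        (fun p' hp' => ⟨⟨p', hp'⟩, hφP p' hp'⟩) q' hq'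
    exact hφQ x.1 x.2 hx
end

section
/- The relation ≼_CS, defined by p ≼_CS q iff every formula of L_CS satisfied by p is satisfied by q, is itself a conformance simulation: if p ≼_CS q then (1) for all a ∈ A, if p →a then q →a, and (2) for all a ∈ A, if q →a q' and p →a then there exists p →a p' with p' ≼_CS q'. -/
/-- A conformance simulation between two LTSs with transition relations
`trP` and `trQ`. -/
def CSSim {P Q A : Type} (trP : P → A → P → Prop) (trQ : Q → A → Q → Prop)
    (R : P → Q → Prop) : Prop :=
  ∀ p q, R p q →
    (∀ a : A, (∃ p', trP p a p') → ∃ q', trQ q a q') ∧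
    (∀ a : A, ∀ q', trQ q a q' → (∃ p'', trP p a p'') →
      ∃ p', trP p a p' ∧ R p' q')

/-- The class `L_CS` of conformance simulation formulas: `tt`, set-indexed
conjunctions and disjunctions, and the conformance modality `aφ`. -/
inductive LCS (A : Type) : Type 1 where
  | tt : LCS A
  | conj (I : Type) (f : I → LCS A) : LCS A
  | disj (I : Type) (f : I → LCS A) : LCS A
  | act (a : A) (φ : LCS A) : LCS A

/-- Satisfaction relation for `L_CS`: in particular `p ⊨ aφ` iff `p` has some
`a`-successor and every `a`-successor of `p` satisfies `φ`. -/
def SatCS {P A : Type} (tr : P → A → P → Prop) : P → LCS A → Prop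
  | _, .tt => True
  | p, .conj _ f => ∀ i, SatCS tr p (f i)
  | p, .disj _ f => ∃ i, SatCS tr p (f i)
  | p, .act a φ => (∃ p', tr p a p') ∧ ∀ p', tr p a p' → SatCS tr p' φ

/-- Completeness: the relation `≼_CS` of logical inclusion w.r.t. `L_CS`
is itself a conformance simulation. -/
theorem csLogicPreorder_isSim {P Q A : Type}
    (trP : P → A → P → Prop) (trQ : Q → A → Q → Prop) :
    CSSim trP trQ
      (fun p q => ∀ φ : LCS A, SatCS trP p φ → SatCS trQ q φ) := by
  intro p q h
  refine ⟨fun a hp => (h (.act a .tt) ⟨hp, fun _ _ => trivial⟩).1, fun a q' hq hp => ?_⟩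
  by_contra! hne
  choose φ hφ hnφ using hne
  -- `p` satisfies `a (⋁ φ_{p'})`, the disjunction ranging over its `a`-successors `p'`;
  -- hence so does `q`, and `q'` satisfies some `φ_{p'}`, against the choice of `φ`.
  obtain ⟨-, hall⟩ := h
    (.act a (.disj {p' // trP p a p'} fun i => φ i.1 i.2))
    ⟨hp, fun p' hp' => ⟨⟨p', hp'⟩, hφ p' hp'⟩⟩
  obtain ⟨⟨p', hp'⟩, hs⟩ := hall q' hq
  exact hnφ p' hp' hs
end
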